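/- For every natural number k, the set of zeros of f_k in the interval [0, π] is exactly {0, ψ*_k, π}, where ψ*_k is the unique ψ ∈ (0, π) with cos(ψ)^(2k+1) + sin(ψ) = 0. -/

import Mathlib

open Real

/-- The desingularised blow-up dynamics on the circle for `ẋ = x^(2k+1) + ε`. -/
noncomputable def f (k : ℕ) (ψ : ℝ) : ℝ :=
  ((2*(k:ℝ)+1) * sin ψ * (cos ψ ^ (2*k+1) + sin ψ)) / ((k:ℝ) * cos (2*ψ) - (k:ℝ) - 1)

/-! The denominator of `f k` never vanishes, so its zeros are those of `sin ψ` and of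
`cos ψ ^ (2k+1) + sin ψ`. The latter is positive on `[0, π/2]`, and on `[π/2, π]` it is strictly
decreasing because both `cos` and `sin` decrease there and odd powers are increasing; hence it has
at most one zero in `[0, π]`. -/

theorem f_eq_zero_iff {k : ℕ} {ψ : ℝ} :
    f k ψ = 0 ↔ sin ψ = 0 ∨ cos ψ ^ (2 * k + 1) + sin ψ = 0 := by
  have hfactor : 2 * (k : ℝ) + 1 ≠ 0 := by positivity
  have hdenom : (k : ℝ) * cos (2 * ψ) - k - 1 < 0 := by
    linarith [mul_le_of_le_one_right k.cast_nonneg (cos_le_one (2 * ψ))]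
  simp only [f, div_eq_zero_iff, mul_eq_zero, hfactor, hdenom.ne, false_or, or_false]

theorem sep_Icc_zero_pi_sin_eq_zero : {ψ ∈ Set.Icc 0 π | sin ψ = 0} = {0, π} := by
  ext ψ
  constructor
  · rintro ⟨⟨hnonneg, hle⟩, hsin⟩
    by_contra hne
    obtain ⟨hzero, hpi⟩ : ψ ≠ 0 ∧ ψ ≠ π := by simpa using hne
    exact (sin_pos_of_pos_of_lt_pi (hnonneg.lt_of_ne' hzero) (hle.lt_of_ne hpi)).ne' hsin
  · rintro (rfl | rfl) <;> simp [pi_nonneg]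

theorem cos_pow_add_sin_pos (n : ℕ) {ψ : ℝ} (hψ : ψ ∈ Set.Icc 0 (π / 2)) :
    0 < cos ψ ^ n + sin ψ := by
  obtain rfl | hpos := hψ.1.eq_or_lt
  · simp
  · have hcos : 0 ≤ cos ψ := cos_nonneg_of_mem_Icc ⟨by linarith [pi_pos], hψ.2⟩
    have hsin : 0 < sin ψ := sin_pos_of_pos_of_lt_pi hpos (by linarith [hψ.2, pi_pos])
    positivity

theorem strictAntiOn_sin : StrictAntiOn sin (Set.Icc (π / 2) (3 * π / 2)) := by
  intro x hx y hy hxy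
  rw [← sin_pi_sub x, ← sin_pi_sub y]
  exact sin_lt_sin_of_lt_of_le_pi_div_two (by linarith [hy.2]) (by linarith [hx.1])
    (by linarith)

theorem strictAntiOn_cos_pow_add_sin {n : ℕ} (hn : Odd n) :
    StrictAntiOn (fun ψ => cos ψ ^ n + sin ψ) (Set.Icc (π / 2) π) :=
  have hcos : StrictAntiOn cos (Set.Icc (π / 2) π) :=
    strictAntiOn_cos.mono (Set.Icc_subset_Icc_left pi_div_two_pos.le)
  have hsin : StrictAntiOn sin (Set.Icc (π / 2) π) :=
    strictAntiOn_sin.mono (Set.Icc_subset_Icc_right (by linarith [pi_pos]))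
  (hn.strictMono_pow.comp_strictAntiOn hcos).add hsin

theorem subsingleton_cos_pow_add_sin_eq_zero {n : ℕ} (hn : Odd n) :
    {ψ ∈ Set.Icc 0 π | cos ψ ^ n + sin ψ = 0}.Subsingleton := by
  have mem_Icc_of_zero {ψ : ℝ} (hψ : ψ ∈ Set.Icc 0 π) (hzero : cos ψ ^ n + sin ψ = 0) :
      ψ ∈ Set.Icc (π / 2) π :=
    ⟨le_of_not_ge fun hle => (cos_pow_add_sin_pos n ⟨hψ.1, hle⟩).ne' hzero, hψ.2⟩
  rintro x ⟨hx, hxzero⟩ y ⟨hy, hyzero⟩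
  exact (strictAntiOn_cos_pow_add_sin hn).injOn (mem_Icc_of_zero hx hxzero)
    (mem_Icc_of_zero hy hyzero) (hxzero.trans hyzero.symm)

/-- The zeros of `f k` in `[0, π]` are exactly `0`, `π`, and the unique
`ψ* ∈ (0, π)` with `cos ψ* ^ (2k+1) + sin ψ* = 0`. -/
theorem zeros_of_blowup_field (k : ℕ) (ψs : ℝ)
    (hψs : ψs ∈ Set.Ioo 0 π) (hzero : cos ψs ^ (2*k+1) + sin ψs = 0) :
    {ψ ∈ Set.Icc (0:ℝ) π | f k ψ = 0} = {0, ψs, π} := by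
  have hsingle : {ψ ∈ Set.Icc 0 π | cos ψ ^ (2 * k + 1) + sin ψ = 0} = {ψs} :=
    (subsingleton_cos_pow_add_sin_eq_zero (odd_two_mul_add_one k)).eq_singleton_of_mem
      ⟨Set.Ioo_subset_Icc_self hψs, hzero⟩
  calc {ψ ∈ Set.Icc (0:ℝ) π | f k ψ = 0}
      = {ψ ∈ Set.Icc 0 π | sin ψ = 0} ∪
          {ψ ∈ Set.Icc 0 π | cos ψ ^ (2 * k + 1) + sin ψ = 0} := by
        simp only [f_eq_zero_iff, Set.sep_or]
    _ = {0, π} ∪ {ψs} := by rw [sep_Icc_zero_pi_sin_eq_zero, hsingle]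
    _ = {0, ψs, π} := by rw [Set.union_singleton, Set.insert_comm]
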